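/- Let R = MvPolynomial (Fin r) ℝ be the real polynomial ring in r variables, and let (V, d) be a cochain complex of R-modules such that every term V^i and every cohomology module H^i(V) is a projective (equivalently, free) R-module. Then for every m ∈ ℤ the natural map ξ : H^m(Hom•(V, R)) → Hom_R(H^{−m}(V), R) — sending the class of a cocycle f ∈ Hom_R(V^{−m}, R) of the dual complex (i.e. f ∘ d_{−(m+1)} = 0) to the R-linear functional on H^{−m}(V) induced by restricting f to ker d_{−m} — is an isomorphism of R-modules. -/

import Mathlib

/-!
The point is that, besides the terms and the cohomology, the coboundaries of the complex are
projective too. Write `Z`, `B`, `H` for cocycles, coboundaries and cohomology. In the exact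
sequences `0 → Z^i → V^i → B^{i+1} → 0` and `0 → B^i → Z^i → H^i → 0` the modules `V^i` and `H^i`
are projective, so `pd B^{i+1} ≤ n + 1` implies `pd Z^i ≤ n` and hence `pd B^i ≤ n`
(`hasProjectiveDimensionLE_range_of_succ`). The complex has no last degree, while by Hilbert's
syzygy theorem every module over `R = K[x_1, …, x_r]` has projective dimension at most `r`
(`globalDimLE_mvPolynomial`), so shifting down `r` times from `B^{i+r}` shows that every `B^i` is
projective (`projective_range`).

The inclusions `B^i ⊆ Z^i ⊆ V^i` are therefore split. Since dual cocycles are the functionals on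
`V^{-m}` that kill `B^{-m}`, restriction to `Z^{-m}` sends them to functionals on `H^{-m}`
(`cocycleRestrict`). This map is surjective because `Z^{-m}` is a direct summand of `V^{-m}`. A dual
cocycle in its kernel kills `Z^{-m}`, so it is a functional on `V^{-m} / Z^{-m} ≅ B^{-m+1}`, which
extends to `V^{-m+1}` because `B^{-m+1}` is a direct summand there; so it is a dual coboundary
(`ker_cocycleRestrict`).

The syzygy theorem is proved by induction on the number of variables, from the exact sequence
`0 → R[X] ⊗ M → R[X] ⊗ M → M → 0` of an `R[X]`-module `M`, whose first map is `X ⊗ 1 - 1 ⊗ X`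
(`exact_charMap_actMap`), and the fact that flat base change does not raise projective dimension.
-/


set_option synthInstance.maxHeartbeats 1000000
set_option maxHeartbeats 1000000

/-- Cast between the terms of a complex along an equality of indices. -/
def vcast (R : Type*) [Ring R] (V : ℤ → Type*) [∀ i, AddCommGroup (V i)]
    [∀ i, Module R (V i)] {i j : ℤ} (h : i = j) : V i ≃ₗ[R] V j := by
  subst h; exact LinearEquiv.refl R (V i)

/-- The submodule of `i`-cocycles of the complex `(V, d)`. -/
abbrev cocycles (R : Type*) [Ring R] (V : ℤ → Type*) [∀ i, AddCommGroup (V i)]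
    [∀ i, Module R (V i)] (d : ∀ i, V i →ₗ[R] V (i + 1)) (i : ℤ) : Submodule R (V i) :=
  LinearMap.ker (d i)

/-- The submodule of `i`-coboundaries of the complex `(V, d)`. -/
abbrev boundaries (R : Type*) [Ring R] (V : ℤ → Type*) [∀ i, AddCommGroup (V i)]
    [∀ i, Module R (V i)] (d : ∀ i, V i →ₗ[R] V (i + 1)) (i : ℤ) : Submodule R (V i) :=
  (LinearMap.range (d (i - 1))).map (vcast R V (show i - 1 + 1 = i by omega)).toLinearMap

/-- The `i`-th cohomology of the complex `(V, d)`: cocycles modulo coboundaries. -/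
abbrev cohomology (R : Type*) [Ring R] (V : ℤ → Type*) [∀ i, AddCommGroup (V i)]
    [∀ i, Module R (V i)] (d : ∀ i, V i →ₗ[R] V (i + 1)) (i : ℤ) :=
  cocycles R V d i ⧸ (boundaries R V d i).comap (cocycles R V d i).subtype

/-- The differential of the `R`-dual complex: `D m = -(-1)^m ⬝ (d (-(m+1)))^t`. -/
def dualD (R : Type*) [CommRing R] (V : ℤ → Type*) [∀ i, AddCommGroup (V i)]
    [∀ i, Module R (V i)] (d : ∀ i, V i →ₗ[R] V (i + 1)) (m : ℤ) :
    Module.Dual R (V (-m)) →ₗ[R] Module.Dual R (V (-(m + 1))) :=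
  ((((m + 1).negOnePow : ℤˣ) : ℤ) : R) •
    ((d (-(m + 1))).dualMap ∘ₗ
      ((vcast R V (show -(m + 1) + 1 = -m by omega)).toLinearMap.dualMap))

universe u

/-! ### Global dimension of polynomial rings -/

open CategoryTheory in
lemma shortExact_of_linearMap {R : Type} [Ring R] {M N L : Type u} [AddCommGroup M] [AddCommGroup N]
    [AddCommGroup L] [Module R M] [Module R N] [Module R L] (f : M →ₗ[R] N) (g : N →ₗ[R] L)
    (hf : Function.Injective f) (hfg : Function.Exact f g) (hg : Function.Surjective g) :
    (ModuleCat.shortComplexOfCompEqZero f g hfg.linearMap_comp_eq_zero).ShortExact where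
  exact := (ShortComplex.ShortExact.moduleCat_exact_iff_function_exact _).mpr hfg
  mono_f := (ModuleCat.mono_iff_injective _).mpr hf
  epi_g := (ModuleCat.epi_iff_surjective _).mpr hg

/-- The (left) global dimension of `R` is at most `n`: every left `R`-module has projective
dimension at most `n`. Only modules in the universe `u` are considered. -/
def GlobalDimLE (R : Type) [Ring R] (n : ℕ) : Prop :=
  ∀ M : ModuleCat.{u} R, CategoryTheory.HasProjectiveDimensionLE M n

attribute [local instance] RingHomInvPair.of_ringEquiv in
lemma GlobalDimLE.of_ringEquiv {R S : Type} [Ring R] [Ring S] (e : R ≃+* S) {n : ℕ}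
    (h : GlobalDimLE.{u} R n) : GlobalDimLE.{u} S n := by
  intro M
  let : Module R M := Module.compHom M (e : R →+* S)
  let e' : (ModuleCat.of R M) ≃ₛₗ[RingHomClass.toRingHom e] M :=
    { AddEquiv.refl M with map_smul' := fun _ _ => rfl }
  have := h (ModuleCat.of R M)
  exact ModuleCat.hasProjectiveDimensionLE_of_semiLinearEquiv e e' n

open CategoryTheory in
lemma globalDimLE_zero_of_field (K : Type) [Field K] : GlobalDimLE.{u} K 0 := by
  intro M
  rw [← projective_iff_hasProjectiveDimensionLE_zero]
  infer_instance

open CategoryTheory TensorProduct in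
/-- Flat base change does not raise the projective dimension. -/
lemma hasProjectiveDimensionLE_baseChange {R S : Type} [CommRing R] [CommRing S] [Algebra R S]
    [Module.Flat R S] (n : ℕ) (M : ModuleCat.{u} R) (h : HasProjectiveDimensionLE M n) :
    HasProjectiveDimensionLE (ModuleCat.of S (S ⊗[R] M)) n := by
  induction n generalizing M with
  | zero =>
    rw [← projective_iff_hasProjectiveDimensionLE_zero] at h ⊢
    have : Module.Projective R M := ModuleCat.projective_of_module_projective M
    exact (IsProjective.iff_projective _).mp inferInstance
  | succ n ih =>
    have hT := M.shortExact_projectiveShortComplex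
    set T := M.projectiveShortComplex with hT'
    have hT2 : Module.Projective R T.X₂ := inferInstance
    have h1 := (hT.hasProjectiveDimensionLT_X₃_iff n inferInstance).mp h
    have hS := shortExact_of_linearMap (T.f.hom.baseChange S) (T.g.hom.baseChange S)
      (Module.Flat.lTensor_preserves_injective_linearMap _ hT.moduleCat_injective_f)
      (lTensor_exact S
        ((ShortComplex.ShortExact.moduleCat_exact_iff_function_exact _).mp hT.exact)
        hT.moduleCat_surjective_g)
      (LinearMap.lTensor_surjective _ hT.moduleCat_surjective_g)
    exact (hS.hasProjectiveDimensionLT_X₃_iff n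
      ((IsProjective.iff_projective _).mp inferInstance)).mpr (ih _ h1)

section Polynomial

open Polynomial TensorProduct

variable {R : Type} [CommRing R] {M : Type u} [AddCommGroup M] [Module R M] [Module R[X] M]
  [IsScalarTower R R[X] M]

variable (R M) in
/-- Multiplication by `X` on an `R[X]`-module, as an `R`-linear map. -/
noncomputable def mulX : M →ₗ[R] M := (LinearMap.lsmul R[X] M X).restrictScalars R

@[simp] lemma mulX_apply (m : M) : mulX R M m = (X : R[X]) • m := rfl

variable (R M) in
/-- The `R[X]`-linear map `X ⊗ 1 - 1 ⊗ X` on `R[X] ⊗[R] M`. -/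
noncomputable def charMap : R[X] ⊗[R] M →ₗ[R[X]] R[X] ⊗[R] M :=
  LinearMap.lsmul R[X] _ X - (mulX R M).baseChange R[X]

@[simp] lemma charMap_tmul (p : R[X]) (m : M) :
    charMap R M (p ⊗ₜ m) = (X * p) ⊗ₜ m - p ⊗ₜ ((X : R[X]) • m) := by
  simp [charMap, smul_tmul']

variable (R M) in
/-- The scalar action `p ⊗ m ↦ p • m` of `R[X]` on `M`. -/
noncomputable def actMap : R[X] ⊗[R] M →ₗ[R[X]] M := LinearMap.liftBaseChange R[X] LinearMap.id

@[simp] lemma actMap_tmul (p : R[X]) (m : M) : actMap R M (p ⊗ₜ m) = p • m := by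
  simp [actMap]

variable (R M) in
/-- An `R`-linear retraction of `charMap`, given by
`X ^ n ⊗ m ↦ ∑_{i + j = n - 1} X ^ i ⊗ X ^ j • m`. -/
noncomputable def charRetraction : R[X] ⊗[R] M →ₗ[R] R[X] ⊗[R] M :=
  TensorProduct.lift ((Polynomial.basisMonomials R).constr R fun n =>
    ∑ i ∈ Finset.range n,
      (TensorProduct.mk R R[X] M (X ^ i)) ∘ₗ ((mulX R M) ^ (n - 1 - i)))

lemma mulX_pow_apply (n : ℕ) (m : M) : (mulX R M ^ n) m = (X ^ n : R[X]) • m := by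
  induction n with
  | zero => simp
  | succ n ih => rw [pow_succ', Module.End.mul_apply, ih, mulX_apply, smul_smul, ← pow_succ']

lemma charRetraction_tmul (n : ℕ) (m : M) : charRetraction R M ((X ^ n) ⊗ₜ m) =
    ∑ i ∈ Finset.range n, (X ^ i : R[X]) ⊗ₜ[R] ((X ^ (n - 1 - i) : R[X]) • m) := by
  have : (X ^ n : R[X]) = Polynomial.basisMonomials R n := by
    simp [X_pow_eq_monomial]
  rw [charRetraction, TensorProduct.lift.tmul, this, Module.Basis.constr_basis]
  simp [mulX_pow_apply]

lemma charRetraction_charMap (t : R[X] ⊗[R] M) : charRetraction R M (charMap R M t) = t := by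
  suffices h : charRetraction R M ∘ₗ (charMap R M).restrictScalars R = LinearMap.id from
    congr($h t)
  refine TensorProduct.ext ((Polynomial.basisMonomials R).ext fun n => LinearMap.ext fun m => ?_)
  have hn : Polynomial.basisMonomials R n = (X ^ n : R[X]) := by simp [X_pow_eq_monomial]
  rw [hn]
  change charRetraction R M (charMap R M ((X ^ n) ⊗ₜ m)) = (X ^ n) ⊗ₜ m
  rw [charMap_tmul, map_sub, ← pow_succ', charRetraction_tmul, charRetraction_tmul,
    Finset.sum_range_succ, add_sub_right_comm, ← Finset.sum_sub_distrib, Finset.sum_eq_zero, zero_add]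
  · simp
  · intro i hi
    have : i < n := Finset.mem_range.mp hi
    rw [smul_smul, ← pow_succ, show n - 1 - i + 1 = n + 1 - 1 - i by omega, sub_self]

/-- The resolution `0 → R[X] ⊗ M → R[X] ⊗ M → M → 0` is exact in the middle, because
`t - 1 ⊗ act(t)` lies in the image of `X ⊗ 1 - 1 ⊗ X` for every `t`. -/
lemma exact_charMap_actMap : Function.Exact (charMap R M) (actMap R M) := by
  intro t
  constructor
  · have key (t : R[X] ⊗[R] M) :
        t - 1 ⊗ₜ actMap R M t ∈ LinearMap.range (charMap R M) := by
      induction t with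
      | zero => simp
      | add a b ha hb =>
        rw [map_add, TensorProduct.tmul_add, add_sub_add_comm]
        exact add_mem ha hb
      | tmul p m =>
        induction p using Polynomial.induction_on' with
        | add p q hp hq =>
          rw [TensorProduct.add_tmul, map_add, TensorProduct.tmul_add, add_sub_add_comm]
          exact add_mem hp hq
        | monomial n a =>
          rw [← mul_one a, ← smul_eq_mul, ← Polynomial.smul_monomial, TensorProduct.smul_tmul,
            ← X_pow_eq_monomial]
          generalize a • m = m
          induction n generalizing m with
          | zero => simp
          | succ n ih =>
            have h := add_mem (ih ((X : R[X]) • m))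
              (LinearMap.mem_range_self (charMap R M) ((X ^ n) ⊗ₜ m))
            convert h using 1
            simp only [actMap_tmul, charMap_tmul, smul_smul, ← pow_succ, ← pow_succ']
            abel
    intro ht
    simpa [ht] using key t
  · rintro ⟨s, rfl⟩
    induction s with
    | zero => simp
    | add a b ha hb => rw [map_add, map_add, ha, hb, add_zero]
    | tmul p m => simp [smul_smul, mul_comm]

end Polynomial

open CategoryTheory Polynomial TensorProduct in
/-- An `R[X]`-module `M` is the cokernel of an injective endomorphism `charMap` of `R[X] ⊗[R] M`,
whose projective dimension over `R[X]` is at most that of `M` over `R`. -/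
lemma GlobalDimLE.polynomial {R : Type} [CommRing R] {n : ℕ} (h : GlobalDimLE.{u} R n) :
    GlobalDimLE.{u} R[X] (n + 1) := by
  intro M
  let : Module R M := Module.compHom M (C : R →+* R[X])
  have : IsScalarTower R R[X] M := ⟨fun a p m => by
    rw [Polynomial.smul_eq_C_mul, mul_smul]; rfl⟩
  have hS := shortExact_of_linearMap (charMap R M) (actMap R M)
    (Function.LeftInverse.injective charRetraction_charMap) exact_charMap_actMap
    (fun m => ⟨1 ⊗ₜ m, by simp⟩)
  have hb : HasProjectiveDimensionLT (ModuleCat.of R[X] (R[X] ⊗[R] M)) (n + 1) :=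
    hasProjectiveDimensionLE_baseChange n (ModuleCat.of R M) (h _)
  exact hS.hasProjectiveDimensionLT_X₃ (n + 1) hb (hasProjectiveDimensionLT_of_ge _ (n + 1) _ (by omega))

/-- **Hilbert's syzygy theorem** over a field, for arbitrary modules. -/
lemma globalDimLE_mvPolynomial (K : Type) [Field K] (r : ℕ) :
    GlobalDimLE.{u} (MvPolynomial (Fin r) K) r := by
  induction r with
  | zero =>
    exact (globalDimLE_zero_of_field K).of_ringEquiv (MvPolynomial.isEmptyRingEquiv K (Fin 0)).symm
  | succ r ih =>
    exact ih.polynomial.of_ringEquiv (MvPolynomial.finSuccEquiv K r).symm.toRingEquiv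

/-! ### Cochain complexes -/

section Complex

variable {R : Type*} [Ring R] {V : ℤ → Type*} [∀ i, AddCommGroup (V i)] [∀ i, Module R (V i)]
  {d : ∀ i, V i →ₗ[R] V (i + 1)}

@[simp] lemma vcast_rfl {i : ℤ} (x : V i) : vcast R V rfl x = x := rfl

lemma map_vcast {i j : ℤ} (h : i = j) (x : V i) :
    d j (vcast R V h x) = vcast R V (congrArg (· + 1) h) (d i x) := by
  subst h; rfl

lemma mem_boundaries {i j : ℤ} (h : j + 1 = i) (x : V i) :
    x ∈ boundaries R V d i ↔ ∃ y : V j, vcast R V h (d j y) = x := by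
  obtain rfl : j = i - 1 := by omega
  constructor
  · rintro ⟨_, ⟨y, rfl⟩, rfl⟩
    exact ⟨y, rfl⟩
  · rintro ⟨y, rfl⟩
    exact ⟨_, ⟨y, rfl⟩, rfl⟩

lemma boundaries_le_cocycles (hd : ∀ i, d (i + 1) ∘ₗ d i = 0) (i : ℤ) :
    boundaries R V d i ≤ cocycles R V d i := by
  intro x hx
  obtain ⟨j, rfl⟩ : ∃ j, j + 1 = i := ⟨i - 1, by omega⟩
  obtain ⟨y, rfl⟩ := (mem_boundaries rfl x).mp hx
  exact congr($(hd j) y)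

lemma boundaries_succ (i : ℤ) : boundaries R V d (i + 1) = LinearMap.range (d i) := by
  ext x
  rw [mem_boundaries rfl]
  simp

end Complex

/-! ### The dual complex -/

section DualComplex

variable {R : Type*} [CommRing R] {V : ℤ → Type*} [∀ i, AddCommGroup (V i)]
  [∀ i, Module R (V i)] {d : ∀ i, V i →ₗ[R] V (i + 1)}

lemma vcast_dual_apply {i j : ℤ} (h : i = j) (f : Module.Dual R (V (-i))) (z : V (-j)) :
    vcast R (fun n => Module.Dual R (V (-n))) h f z =
      f (vcast R V (congrArg (- ·) h.symm) z) := by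
  subst h; rfl

lemma dualD_apply (m : ℤ) (f : Module.Dual R (V (-m))) (z : V (-(m + 1))) :
    dualD R V d m f z = ((((m + 1).negOnePow : ℤˣ) : ℤ) : R) *
      f (vcast R V (show -(m + 1) + 1 = -m by omega) (d (-(m + 1)) z)) := rfl

lemma negOnePow_cast_mul_self (m : ℤ) :
    (((m.negOnePow : ℤˣ) : ℤ) : R) * (((m.negOnePow : ℤˣ) : ℤ) : R) = 1 := by
  rw [← Int.cast_mul, ← Units.val_mul, ← sq, Int.units_sq, Units.val_one, Int.cast_one]

/-- A functional is a cocycle of the dual complex exactly when it kills the coboundaries. -/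
lemma mem_cocycles_dual {m : ℤ} (f : Module.Dual R (V (-m))) :
    f ∈ cocycles R (fun n => Module.Dual R (V (-n))) (dualD R V d) m ↔
      ∀ x ∈ boundaries R V d (-m), f x = 0 := by
  have h : -(m + 1) + 1 = -m := by omega
  constructor
  · intro hf x hx
    obtain ⟨y, rfl⟩ := (mem_boundaries h x).mp hx
    have h1 : dualD R V d m f y = 0 := congr($hf y)
    rw [dualD_apply] at h1
    have h2 := congr(((((m + 1).negOnePow : ℤˣ) : ℤ) : R) * $h1)
    rwa [← mul_assoc, negOnePow_cast_mul_self, one_mul, mul_zero] at h2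
  · intro hf
    refine LinearMap.ext fun y => ?_
    rw [dualD_apply, hf _ ((mem_boundaries h _).mpr ⟨y, rfl⟩), mul_zero]
    rfl

/-- The coboundaries of the dual complex are the functionals that factor through the
differential; the sign in `dualD` is absorbed into the second factor. -/
lemma mem_boundaries_dual {m : ℤ} (f : Module.Dual R (V (-m))) :
    f ∈ boundaries R (fun n => Module.Dual R (V (-n))) (dualD R V d) m ↔
      ∃ g : Module.Dual R (V (-m + 1)), f = g ∘ₗ d (-m) := by
  have h : m - 1 + 1 = m := by omega
  have h' : -m + 1 = -(m - 1) := by omega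
  have key (g : Module.Dual R (V (-(m - 1)))) (z : V (-m)) :
      vcast R (fun n => Module.Dual R (V (-n))) h (dualD R V d (m - 1) g) z =
        ((((m - 1 + 1).negOnePow : ℤˣ) : ℤ) : R) * g (vcast R V h' (d (-m) z)) := by
    rw [vcast_dual_apply, dualD_apply, map_vcast]
    congr 2
    generalize d (-m) z = w
    have aux {a b c : ℤ} (h₁ : a = b) (h₂ : b = c) (h₃ : a = c) (x : V a) :
        vcast R V h₂ (vcast R V h₁ x) = vcast R V h₃ x := by
      subst h₁ h₂; rfl
    exact aux _ _ _ w
  rw [mem_boundaries h]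
  constructor
  · rintro ⟨g, rfl⟩
    exact ⟨((((m - 1 + 1).negOnePow : ℤˣ) : ℤ) : R) • (g ∘ₗ (vcast R V h').toLinearMap),
      LinearMap.ext fun z => key g z⟩
  · rintro ⟨g, rfl⟩
    refine ⟨((((m - 1 + 1).negOnePow : ℤˣ) : ℤ) : R) • (g ∘ₗ (vcast R V h').symm.toLinearMap),
      LinearMap.ext fun z => ?_⟩
    rw [key]
    change _ * (_ * g ((vcast R V h').symm (vcast R V h' _))) = _
    rw [LinearEquiv.symm_apply_apply, ← mul_assoc, negOnePow_cast_mul_self, one_mul]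
    rfl

/-- The inclusion of the cocycles in degree `i` splits once the coboundaries in degree `i + 1`
are projective. -/
lemma exists_retraction_cocycles (i : ℤ) [Module.Projective R (LinearMap.range (d i))] :
    ∃ p : V i →ₗ[R] cocycles R V d i, ∀ z : cocycles R V d i, p z = z := by
  obtain ⟨s, hs⟩ := Module.projective_lifting_property (d i).rangeRestrict LinearMap.id
    (d i).surjective_rangeRestrict
  have hs' (x : LinearMap.range (d i)) : d i (s x) = x := congr(($hs x : V (i + 1)))
  have hmem (x : V i) :
      (LinearMap.id - s ∘ₗ (d i).rangeRestrict : V i →ₗ[R] V i) x ∈ cocycles R V d i := by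
    rw [LinearMap.mem_ker]
    simp [hs']
  refine ⟨(LinearMap.id - s ∘ₗ (d i).rangeRestrict).codRestrict _ hmem, fun z => ?_⟩
  have hz : (d i).rangeRestrict z = 0 := Subtype.ext z.2
  ext
  simp [hz]

/-- The inclusion of the coboundaries into the cocycles splits when cohomology is projective. -/
lemma exists_retraction_boundaries (i : ℤ)
    [Module.Projective R (cohomology R V d i)] :
    ∃ q : cocycles R V d i →ₗ[R] boundaries R V d i,
      ∀ (z : cocycles R V d i) (hz : (z : V i) ∈ boundaries R V d i), q z = ⟨z, hz⟩ := by
  set B := (boundaries R V d i).comap (cocycles R V d i).subtype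
  obtain ⟨s, hs⟩ := Module.projective_lifting_property B.mkQ LinearMap.id B.mkQ_surjective
  have hs' (x : cohomology R V d i) : B.mkQ (s x) = x := congr($hs x)
  have hmem (x : cocycles R V d i) :
      ((cocycles R V d i).subtype ∘ₗ (LinearMap.id - s ∘ₗ B.mkQ)) x ∈ boundaries R V d i :=
    (Submodule.Quotient.mk_eq_zero B).mp (by
      change B.mkQ (x - s (B.mkQ x)) = 0
      rw [map_sub, hs', sub_self])
  refine ⟨((cocycles R V d i).subtype ∘ₗ (LinearMap.id - s ∘ₗ B.mkQ)).codRestrict _ hmem,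
    fun z hz => ?_⟩
  have hz0 : B.mkQ z = 0 := (Submodule.Quotient.mk_eq_zero B).mpr hz
  refine Subtype.ext ?_
  change ((z - s (B.mkQ z) : cocycles R V d i) : V i) = z
  rw [hz0, map_zero, sub_zero]

variable (d) in
/-- Restriction of a cocycle of the dual complex to cocycles of the complex, as a functional on
cohomology. -/
def cocycleRestrict (m : ℤ) :
    cocycles R (fun n => Module.Dual R (V (-n))) (dualD R V d) m →ₗ[R]
      Module.Dual R (cohomology R V d (-m)) where
  toFun f := Submodule.liftQ _ ((f : Module.Dual R (V (-m))) ∘ₗ (cocycles R V d (-m)).subtype)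
    fun z hz => (mem_cocycles_dual _).mp f.2 z hz
  map_add' _ _ := Submodule.linearMap_qext _ (LinearMap.ext fun _ => rfl)
  map_smul' _ _ := Submodule.linearMap_qext _ (LinearMap.ext fun _ => rfl)

@[simp] lemma cocycleRestrict_mk {m : ℤ}
    (f : cocycles R (fun n => Module.Dual R (V (-n))) (dualD R V d) m)
    (z : cocycles R V d (-m)) :
    cocycleRestrict d m f (Submodule.Quotient.mk z) = f.1 z.1 := rfl

lemma cocycleRestrict_surjective (m : ℤ) [Module.Projective R (LinearMap.range (d (-m)))]
    (hd : ∀ i, d (i + 1) ∘ₗ d i = 0) :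
    Function.Surjective (cocycleRestrict d m) := by
  intro φ
  obtain ⟨p, hp⟩ := exists_retraction_cocycles (d := d) (-m)
  refine ⟨⟨φ ∘ₗ Submodule.mkQ _ ∘ₗ p, (mem_cocycles_dual _).mpr fun x hx => ?_⟩, ?_⟩
  · have hxZ := boundaries_le_cocycles hd _ hx
    have h0 : (Submodule.Quotient.mk ⟨x, hxZ⟩ : cohomology R V d (-m)) = 0 :=
      (Submodule.Quotient.mk_eq_zero _).mpr hx
    have h1 : p x = ⟨x, hxZ⟩ := hp ⟨x, hxZ⟩
    change φ (Submodule.mkQ _ (p x)) = 0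
    rw [h1]
    exact (congrArg φ h0).trans (map_zero φ)
  · refine Submodule.linearMap_qext _ (LinearMap.ext fun z => ?_)
    change φ (Submodule.mkQ _ (p z)) = φ (Submodule.mkQ _ z)
    rw [hp]

/-- A dual cocycle vanishing on cocycles is a functional on `range d`, which extends to the
next term because `range d` is a direct summand there. -/
lemma ker_cocycleRestrict (m : ℤ) (hd : ∀ i, d (i + 1) ∘ₗ d i = 0)
    (hB : ∀ i, Module.Projective R (LinearMap.range (d i)))
    (hH : ∀ i, Module.Projective R (cohomology R V d i)) :
    LinearMap.ker (cocycleRestrict d m) =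
      (boundaries R (fun n => Module.Dual R (V (-n))) (dualD R V d) m).comap
        (cocycles R (fun n => Module.Dual R (V (-n))) (dualD R V d) m).subtype := by
  ext ⟨f, hf⟩
  rw [Submodule.mem_comap, Submodule.subtype_apply, mem_boundaries_dual, LinearMap.mem_ker]
  constructor
  · intro h
    have hfz (z : V (-m)) (hz : z ∈ LinearMap.ker (d (-m))) : f z = 0 :=
      congr($h (Submodule.Quotient.mk ⟨z, hz⟩))
    obtain ⟨s, hs⟩ := Module.projective_lifting_property (d (-m)).rangeRestrict LinearMap.id
      (d (-m)).surjective_rangeRestrict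
    obtain ⟨p, hp⟩ := exists_retraction_cocycles (d := d) (-m + 1)
    obtain ⟨q, hq⟩ := exists_retraction_boundaries (d := d) (-m + 1)
    have hle : boundaries R V d (-m + 1) ≤ LinearMap.range (d (-m)) := (boundaries_succ _).le
    refine ⟨f ∘ₗ s ∘ₗ Submodule.inclusion hle ∘ₗ q ∘ₗ p, LinearMap.ext fun x => ?_⟩
    have hx : d (-m) x ∈ boundaries R V d (-m + 1) := by
      rw [boundaries_succ]; exact LinearMap.mem_range_self _ _
    have h1 : p (d (-m) x) = ⟨d (-m) x, boundaries_le_cocycles hd _ hx⟩ :=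
      hp ⟨d (-m) x, boundaries_le_cocycles hd _ hx⟩
    simp only [LinearMap.comp_apply, h1]
    rw [hq _ hx, ← sub_eq_zero, ← map_sub]
    refine hfz _ ?_
    rw [LinearMap.mem_ker, map_sub, sub_eq_zero]
    exact congr(($hs ⟨d (-m) x, hle hx⟩ : V (-m + 1))).symm
  · rintro ⟨g, hg⟩
    refine Submodule.linearMap_qext _ (LinearMap.ext fun z => ?_)
    change f z = 0
    have hg' : f = g ∘ₗ d (-m) := hg
    rw [hg', LinearMap.comp_apply, z.2, map_zero]

end DualComplex

/-! ### Projectivity of coboundaries -/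

section Splitting

open CategoryTheory

variable {R : Type} [CommRing R] {V : ℤ → Type u} [∀ i, AddCommGroup (V i)]
  [∀ i, Module R (V i)] {d : ∀ i, V i →ₗ[R] V (i + 1)}

/-- Dimension shifting: going down one cohomological degree lowers the projective dimension of
the coboundaries, or rather a bound `n + 1` on it, by one. -/
lemma hasProjectiveDimensionLE_range_of_succ (hd : ∀ i, d (i + 1) ∘ₗ d i = 0)
    (hV : ∀ i, Module.Projective R (V i)) (hH : ∀ i, Module.Projective R (cohomology R V d i))
    (n : ℕ) (i : ℤ)
    (h : HasProjectiveDimensionLE (ModuleCat.of R (LinearMap.range (d (i + 1)))) (n + 1)) :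
    HasProjectiveDimensionLE (ModuleCat.of R (LinearMap.range (d i))) n := by
  have hZ := LinearMap.shortExact_shortComplexKer (d (i + 1)).surjective_rangeRestrict
  have h1 := (hZ.hasProjectiveDimensionLT_X₃_iff n
    ((IsProjective.iff_projective _).mp (hV (i + 1)))).mp h
  have h2 : HasProjectiveDimensionLT (ModuleCat.of R (cocycles R V d (i + 1))) (n + 1) :=
    hasProjectiveDimensionLT_of_iso (LinearEquiv.toModuleIso
      (LinearEquiv.ofEq _ _ (LinearMap.ker_rangeRestrict _))) (n + 1)
  set B := (boundaries R V d (i + 1)).comap (cocycles R V d (i + 1)).subtype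
  have hQ : HasProjectiveDimensionLT (ModuleCat.of R (cohomology R V d (i + 1))) (n + 1 + 1) := by
    have := (IsProjective.iff_projective _).mp (hH (i + 1))
    exact hasProjectiveDimensionLT_of_ge _ 1 _ (by omega)
  have hS := shortExact_of_linearMap B.subtype B.mkQ B.injective_subtype
    (LinearMap.exact_subtype_mkQ B) B.mkQ_surjective
  have h3 : HasProjectiveDimensionLE (ModuleCat.of R B) n :=
    hS.hasProjectiveDimensionLT_X₁ (n + 1) h2 hQ
  exact hasProjectiveDimensionLT_of_iso (LinearEquiv.toModuleIso
    ((Submodule.comapSubtypeEquivOfLe (boundaries_le_cocycles hd _)).trans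
      (LinearEquiv.ofEq _ _ (boundaries_succ i)))) (n + 1)

/-- Over a ring of finite global dimension `n`, the coboundaries in degree `i + 1` are projective:
start from `range (d (i + n))`, of projective dimension at most `n`, and shift down `n` times. -/
lemma projective_range (hd : ∀ i, d (i + 1) ∘ₗ d i = 0)
    (hV : ∀ i, Module.Projective R (V i)) (hH : ∀ i, Module.Projective R (cohomology R V d i))
    {n : ℕ} (hR : GlobalDimLE.{u} R n) (i : ℤ) : Module.Projective R (LinearMap.range (d i)) := by
  suffices h : ∀ (k : ℕ) (i : ℤ),
      HasProjectiveDimensionLE (ModuleCat.of R (LinearMap.range (d i))) k →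
      HasProjectiveDimensionLE (ModuleCat.of R (LinearMap.range (d (i - k)))) 0 by
    have h0 := h n (i + n) (hR _)
    rw [add_sub_cancel_right, ← projective_iff_hasProjectiveDimensionLE_zero] at h0
    exact (IsProjective.iff_projective _).mpr h0
  intro k
  induction k with
  | zero =>
    intro i h
    rwa [show i - ((0 : ℕ) : ℤ) = i by simp]
  | succ k ih =>
    intro i h
    obtain ⟨j, rfl⟩ : ∃ j, i = j + 1 := ⟨i - 1, by omega⟩
    rw [show j + 1 - ((k + 1 : ℕ) : ℤ) = j - k by push_cast; ring]
    exact ih j (hasProjectiveDimensionLE_range_of_succ hd hV hH k j h)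

end Splitting

/-- **Duality and cohomology over a polynomial ring.**  Let `R = ℝ[x_1, …, x_r]` and let
`(V, d)` be a cochain complex of `R`-modules all of whose terms and all of whose
cohomology modules are projective.  Then for every `m` the natural map
`H^m(Hom•(V, R)) → Hom_R(H^{-m}(V), R)`, sending the class of a cocycle `f` of the dual
complex to the functional induced by restricting `f` to cocycles, is an isomorphism. -/
theorem stmt12 (r : ℕ)
    (V : ℤ → Type*) [∀ i, AddCommGroup (V i)]
    [∀ i, Module (MvPolynomial (Fin r) ℝ) (V i)]
    (d : ∀ i, V i →ₗ[MvPolynomial (Fin r) ℝ] V (i + 1))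
    (hd : ∀ i, d (i + 1) ∘ₗ d i = 0)
    (hproj : ∀ i, Module.Projective (MvPolynomial (Fin r) ℝ) (V i))
    (hprojH : ∀ i, Module.Projective (MvPolynomial (Fin r) ℝ)
      (cohomology (MvPolynomial (Fin r) ℝ) V d i))
    (m : ℤ) :
    ∃ e : cohomology (MvPolynomial (Fin r) ℝ)
          (fun n => Module.Dual (MvPolynomial (Fin r) ℝ) (V (-n)))
          (dualD (MvPolynomial (Fin r) ℝ) V d) m ≃ₗ[MvPolynomial (Fin r) ℝ]
        Module.Dual (MvPolynomial (Fin r) ℝ)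
          (cohomology (MvPolynomial (Fin r) ℝ) V d (-m)),
      ∀ (f : Module.Dual (MvPolynomial (Fin r) ℝ) (V (-m)))
        (hf : f ∈ cocycles (MvPolynomial (Fin r) ℝ)
          (fun n => Module.Dual (MvPolynomial (Fin r) ℝ) (V (-n)))
          (dualD (MvPolynomial (Fin r) ℝ) V d) m)
        (z : V (-m)) (hz : z ∈ cocycles (MvPolynomial (Fin r) ℝ) V d (-m)),
        e (Submodule.Quotient.mk ⟨f, hf⟩) (Submodule.Quotient.mk ⟨z, hz⟩) = f z := by
  have hB := projective_range hd hproj hprojH (globalDimLE_mvPolynomial ℝ r)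
  have hker := ker_cocycleRestrict m hd hB hprojH
  refine ⟨(Submodule.quotEquivOfEq _ _ hker.symm).trans
    ((cocycleRestrict d m).quotKerEquivOfSurjective (cocycleRestrict_surjective m hd)), ?_⟩
  intro f hf z hz
  rfl
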